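/- Two quantum affine spaces O_p(k^n) and O_q(k^m) are isomorphic as k-algebras if and only if n = m and there exists a permutation σ ∈ S_n with q_{ij} = p_{σ(i)σ(j)} for all i,j. -/

import Mathlib

open scoped BigOperators

/-- `p` is multiplicatively antisymmetric. -/
def MultAntisym {k : Type*} [Field k] {n : ℕ} (p : Matrix (Fin n) (Fin n) k) : Prop :=
  (∀ i, p i i = 1) ∧ ∀ i j, p i j * p j i = 1

/-- Defining relations of quantum affine `n`-space: `x i * x j = p i j • (x j * x i)`. -/
inductive QASRel (k : Type*) [Field k] {n : ℕ} (p : Matrix (Fin n) (Fin n) k) :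
    FreeAlgebra k (Fin n) → FreeAlgebra k (Fin n) → Prop
  | rel (i j : Fin n) :
      QASRel k p (FreeAlgebra.ι k i * FreeAlgebra.ι k j)
        (p i j • (FreeAlgebra.ι k j * FreeAlgebra.ι k i))

/-- Multiparameter quantum affine `n`-space `O_p(k^n)`. -/
abbrev QAS (k : Type*) [Field k] {n : ℕ} (p : Matrix (Fin n) (Fin n) k) :=
  RingQuot (QASRel k p)

/-- The canonical degree-one generators of `O_p(k^n)`. -/
noncomputable def qasGen (k : Type*) [Field k] {n : ℕ} (p : Matrix (Fin n) (Fin n) k)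
    (i : Fin n) : QAS k p :=
  RingQuot.mkAlgHom k (QASRel k p) (FreeAlgebra.ι k i)

/-!
For an algebra homomorphism `φ : O_p(k^n) → O_q(k^m)` let `α i` be the constant term and let the
`i`-th row of `A` be the linear part of `φ (x i)`. The linear part of a product is a combination of
the linear parts of its factors, so if `φ` is surjective then the rows of `A` span `k^m`. Hence
`m ≤ n`, and `A` is invertible when `n = m`.

Multiplying each generator of `O_q` by a central variable `T`, we compare coefficients of powers of
`T` in the images of the relations of `O_p`. In degree one, independent rows force
`α i = α j = 0` whenever `p i j ≠ 1`; the constant terms then cancel in degree two, so the linear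
parts of the `φ (x i)` again satisfy the relations of `O_p`. (This is the instance of the Bell–Zhang
theorem that is needed.)

Expanding these quadratic relations in the monomials of `O_q` gives equations on the entries of
`A`, and a nonzero term of the expansion of `det A` supplies the permutation.
-/

theorem exists_perm_forall_apply_ne_zero_of_det_ne_zero {ι R : Type*} [Fintype ι] [DecidableEq ι]
    [CommRing R] {A : Matrix ι ι R} (hA : A.det ≠ 0) :
    ∃ σ : Equiv.Perm ι, ∀ i, A (σ i) i ≠ 0 := by
  rw [Matrix.det_apply] at hA
  obtain ⟨σ, -, hσ⟩ := Finset.exists_ne_zero_of_sum_ne_zero hA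
  refine ⟨σ, fun i hi => hσ ?_⟩
  rw [Finset.prod_eq_zero (f := fun i => A (σ i) i) (Finset.mem_univ i) hi, smul_zero]

namespace QAS

open scoped Polynomial Matrix

variable {k : Type*} [Field k] {n m : ℕ}
  {p : Matrix (Fin n) (Fin n) k} {q : Matrix (Fin m) (Fin m) k}

section UniversalProperty

variable {B : Type*} [Semiring B] [Algebra k B]

theorem gen_mul_gen (p : Matrix (Fin n) (Fin n) k) (i j : Fin n) :
    qasGen k p i * qasGen k p j = p i j • (qasGen k p j * qasGen k p i) := by
  simp only [qasGen, ← map_mul, ← map_smul]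
  exact RingQuot.mkAlgHom_rel k (QASRel.rel i j)

/-- The universal property of `O_p(k^n)`: a family satisfying the defining relations determines
an algebra homomorphism. -/
noncomputable def lift (z : Fin n → B) (hz : ∀ i j, z i * z j = p i j • (z j * z i)) :
    QAS k p →ₐ[k] B :=
  RingQuot.liftAlgHom k ⟨FreeAlgebra.lift k z, by
    rintro _ _ ⟨i, j⟩
    simp [hz i j]⟩

@[simp]
theorem lift_gen (z : Fin n → B) (hz : ∀ i j, z i * z j = p i j • (z j * z i)) (i : Fin n) :
    lift z hz (qasGen k p i) = z i := by
  simp [lift, qasGen]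

theorem algHom_ext {f g : QAS k p →ₐ[k] B} (h : ∀ i, f (qasGen k p i) = g (qasGen k p i)) :
    f = g := by
  ext i
  simpa [qasGen] using h i

@[elab_as_elim]
protected theorem induction {C : QAS k p → Prop}
    (algebraMap : ∀ r, C (algebraMap k (QAS k p) r))
    (gen : ∀ i, C (qasGen k p i)) (mul : ∀ x y, C x → C y → C (x * y))
    (add : ∀ x y, C x → C y → C (x + y)) (x : QAS k p) : C x := by
  obtain ⟨w, rfl⟩ := RingQuot.mkAlgHom_surjective k (QASRel k p) x
  induction w using FreeAlgebra.induction with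
  | grade0 r => simpa using algebraMap r
  | grade1 i => exact gen i
  | mul a b ha hb => simpa using mul _ _ ha hb
  | add a b ha hb => simpa using add _ _ ha hb

/-- The homomorphism sending the `i`-th generator to the `f i`-th one. -/
noncomputable def map (f : Fin n → Fin m) (hf : ∀ i j, q (f i) (f j) = p i j) :
    QAS k p →ₐ[k] QAS k q :=
  lift (fun i => qasGen k q (f i)) fun i j => by rw [gen_mul_gen, hf]

/-- The isomorphism of quantum affine spaces induced by renumbering the generators. -/
noncomputable def congr (e : Fin n ≃ Fin m) (he : ∀ i j, q (e i) (e j) = p i j) :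
    QAS k p ≃ₐ[k] QAS k q :=
  AlgEquiv.ofAlgHom (map e he) (map e.symm fun i j => by simp [← he])
    (algHom_ext fun i => by simp [map]) (algHom_ext fun i => by simp [map])

end UniversalProperty

section LinearParts

/-- The first-order expansion at the origin: `fst` is the constant term and `snd` the vector of
coefficients of the generators. -/
noncomputable def jet (p : Matrix (Fin n) (Fin n) k) :
    QAS k p →ₐ[k] TrivSqZeroExt k (Fin n → k) :=
  lift (fun i => TrivSqZeroExt.inr (Pi.single i 1)) fun i j => by simp

@[simp]
theorem jet_gen (i : Fin n) : jet p (qasGen k p i) = TrivSqZeroExt.inr (Pi.single i 1) :=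
  lift_gen _ _ _

/-- The linear form `∑ i, v i • x i` in the generators of `O_p(k^n)`. -/
noncomputable def linearForm (p : Matrix (Fin n) (Fin n) k) : (Fin n → k) →ₗ[k] QAS k p :=
  Fintype.linearCombination k (qasGen k p)

/-- The homomorphism `O_p(k^n) → O_p(k^n)[T]` multiplying each generator by `T`. It records the
grading of `O_p(k^n)` by degree: the coefficient of `T ^ d` is the component of degree `d`. -/
noncomputable def homogenize (p : Matrix (Fin n) (Fin n) k) : QAS k p →ₐ[k] (QAS k p)[X] :=
  lift (fun i => Polynomial.monomial 1 (qasGen k p i)) fun i j => by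
    rw [Polynomial.monomial_mul_monomial, Polynomial.monomial_mul_monomial, gen_mul_gen,
      Polynomial.smul_monomial]

theorem coeff_zero_homogenize (x : QAS k p) :
    (homogenize p x).coeff 0 = algebraMap k _ (jet p x).fst := by
  induction x using QAS.induction with
  | algebraMap r => simp [TrivSqZeroExt.algebraMap_eq_inl, Polynomial.algebraMap_apply]
  | gen i => simp [homogenize]
  | mul x y hx hy => simp [hx, hy]
  | add x y hx hy => simp [hx, hy]

theorem coeff_one_homogenize (x : QAS k p) :
    (homogenize p x).coeff 1 = linearForm p (jet p x).snd := by
  induction x using QAS.induction with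
  | algebraMap r => simp [TrivSqZeroExt.algebraMap_eq_inl, Polynomial.algebraMap_apply]
  | gen i => simp [homogenize, linearForm, Fintype.linearCombination_apply_single]
  | mul x y hx hy =>
    simp [Polynomial.mul_coeff_one, coeff_zero_homogenize, hx, hy, ← Algebra.smul_def,
      ← Algebra.commutes]
  | add x y hx hy => simp [hx, hy]

theorem coeff_two_homogenize_mul (x y : QAS k p) :
    (homogenize p (x * y)).coeff 2 =
      (jet p x).fst • (homogenize p y).coeff 2 + linearForm p (jet p x).snd *
        linearForm p (jet p y).snd + (jet p y).fst • (homogenize p x).coeff 2 := by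
  rw [map_mul, Polynomial.coeff_mul, Finset.Nat.sum_antidiagonal_eq_sum_range_succ_mk]
  simp [Finset.sum_range_succ, coeff_zero_homogenize, coeff_one_homogenize, ← Algebra.smul_def,
    ← Algebra.commutes]

/-- The Jacobian at the origin: its `i`-th row is the linear part of `φ (x i)`. -/
noncomputable def jacobian (φ : QAS k p →ₐ[k] QAS k q) : Matrix (Fin n) (Fin m) k :=
  Matrix.of fun i => (jet q (φ (qasGen k p i))).snd

variable (φ : QAS k p →ₐ[k] QAS k q)

theorem jacobian_apply (i : Fin n) : jacobian φ i = (jet q (φ (qasGen k p i))).snd := rfl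

theorem snd_jet_mem_span_jacobian (x : QAS k p) :
    (jet q (φ x)).snd ∈ Submodule.span k (Set.range (jacobian φ).row) := by
  induction x using QAS.induction with
  | algebraMap r => simp [TrivSqZeroExt.algebraMap_eq_inl]
  | gen i => exact Submodule.subset_span ⟨i, rfl⟩
  | mul x y hx hy =>
    simpa using add_mem (Submodule.smul_mem _ _ hy) (Submodule.smul_mem _ _ hx)
  | add x y hx hy => simpa using add_mem hx hy

theorem span_jacobian_eq_top (hφ : Function.Surjective φ) :
    Submodule.span k (Set.range (jacobian φ).row) = ⊤ := by
  rw [eq_top_iff, ← (Pi.basisFun k (Fin m)).span_eq, Submodule.span_le]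
  rintro _ ⟨a, rfl⟩
  obtain ⟨x, hx⟩ := hφ (qasGen k q a)
  simpa [hx] using snd_jet_mem_span_jacobian φ x

theorem le_of_surjective (hφ : Function.Surjective φ) : m ≤ n := by
  simpa using finrank_le_of_span_eq_top (span_jacobian_eq_top φ hφ)

theorem isUnit_jacobian {p q : Matrix (Fin n) (Fin n) k} (φ : QAS k p →ₐ[k] QAS k q)
    (hφ : Function.Surjective φ) : IsUnit (jacobian φ) :=
  Matrix.linearIndependent_rows_iff_isUnit.1 <|
    linearIndependent_of_top_le_span_of_card_eq_finrank (span_jacobian_eq_top φ hφ).ge (by simp)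

variable {φ}

theorem fst_jet_map_gen_eq_zero_of_ne_one (hp : ∀ i, p i i = 1)
    (hφ : LinearIndependent k (jacobian φ).row) {i j : Fin n} (hij : p i j ≠ 1) :
    (jet q (φ (qasGen k p i))).fst = 0 ∧ (jet q (φ (qasGen k p j))).fst = 0 := by
  set α := fun i => (jet q (φ (qasGen k p i))).fst
  have hne : i ≠ j := by
    rintro rfl
    exact hij (hp i)
  have hrel : α i • jacobian φ j + α j • jacobian φ i =
      p i j • (α j • jacobian φ i + α i • jacobian φ j) := by
    simpa only [map_mul, map_smul, TrivSqZeroExt.snd_mul, TrivSqZeroExt.snd_smul, op_smul_eq_smul,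
      ← jacobian_apply] using congrArg (fun x => (jet q (φ x)).snd) (gen_mul_gen p i j)
  have hzero : α j • jacobian φ i + α i • jacobian φ j = 0 := by
    refine (smul_eq_zero.1 ?_).resolve_left (sub_ne_zero.2 hij.symm)
    rw [sub_smul, one_smul, ← hrel, add_comm, sub_self]
  exact ((LinearIndepOn.pair_iff _ hne).1 (hφ.linearIndepOn _) _ _ hzero).symm

theorem linearForm_jacobian_mul (hp : ∀ i, p i i = 1)
    (hφ : LinearIndependent k (jacobian φ).row) (i j : Fin n) :
    linearForm q (jacobian φ i) * linearForm q (jacobian φ j) =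
      p i j • (linearForm q (jacobian φ j) * linearForm q (jacobian φ i)) := by
  have hrel := congrArg (fun x => (homogenize q (φ x)).coeff 2) (gen_mul_gen p i j)
  simp only [map_mul φ, map_smul, Polynomial.coeff_smul, coeff_two_homogenize_mul,
    ← jacobian_apply] at hrel
  obtain hij | hij := eq_or_ne (p i j) 1
  · rw [hij] at hrel ⊢
    linear_combination (norm := module) hrel
  · obtain ⟨hi, hj⟩ := fst_jet_map_gen_eq_zero_of_ne_one hp hφ hij
    simpa [hi, hj] using hrel

end LinearParts

section QuadraticRelations

-- The hypothesis on `u` and `t` makes the bilinear form `(v ⬝ᵥ u) * (w ⬝ᵥ t)` factor through the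
-- multiplication of linear forms in `O_q`.
theorem dotProduct_mul_dotProduct_of_linearForm_mul {u t : Fin m → k}
    (hut : ∀ a b, u a * t b = q a b * (u b * t a)) {v w : Fin m → k} {r : k}
    (hvw : linearForm q v * linearForm q w = r • (linearForm q w * linearForm q v)) :
    (v ⬝ᵥ u) * (w ⬝ᵥ t) = r * ((w ⬝ᵥ u) * (v ⬝ᵥ t)) := by
  let ρ : QAS k q →ₐ[k] Matrix (Fin 3) (Fin 3) k :=
    lift (fun a => Matrix.single 0 1 (u a) + Matrix.single 1 2 (t a)) fun a b => by
      simp [add_mul, mul_add, hut a b]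
  have hρ (v : Fin m → k) :
      ρ (linearForm q v) = Matrix.single 0 1 (v ⬝ᵥ u) + Matrix.single 1 2 (v ⬝ᵥ t) := by
    simp only [ρ, linearForm, Fintype.linearCombination_apply, map_sum, map_smul, lift_gen,
      smul_add, Matrix.smul_single, smul_eq_mul, Finset.sum_add_distrib, dotProduct]
    simp only [← Matrix.singleAddMonoidHom_apply, map_sum]
  simpa [hρ, add_mul, mul_add] using congrArg (fun x => ρ x 0 2) hvw

variable {v w : Fin m → k} {r : k}

theorem diag_coeff_eq_of_linearForm_mul {a : Fin m} (ha : q a a = 1)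
    (hvw : linearForm q v * linearForm q w = r • (linearForm q w * linearForm q v)) :
    v a * w a = r * (w a * v a) := by
  simpa using dotProduct_mul_dotProduct_of_linearForm_mul (u := Pi.single a 1) (t := Pi.single a 1)
    (fun b c => by by_cases hb : b = a <;> by_cases hc : c = a <;> simp [hb, hc, ha]) hvw

-- Compares the coefficients of `x b * x a`, as `x a * x b = q a b • (x b * x a)`.
theorem cross_coeff_eq_of_linearForm_mul (hq : MultAntisym q)
    (hvw : linearForm q v * linearForm q w = r • (linearForm q w * linearForm q v))
    {a b : Fin m} (hab : a ≠ b) :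
    q a b * (v a * w b) + v b * w a = r * (q a b * (w a * v b) + w b * v a) := by
  have ha := diag_coeff_eq_of_linearForm_mul (hq.1 a) hvw
  have hb := diag_coeff_eq_of_linearForm_mul (hq.1 b) hvw
  have hsum := dotProduct_mul_dotProduct_of_linearForm_mul
    (u := Pi.single a 1 + Pi.single b 1) (t := Pi.single a 1 + Pi.single b (q a b))
    (fun c d => by
      simp only [Pi.add_apply, Pi.single_apply]
      grind [hq.1 a, hq.1 b, hq.2 a b]) hvw
  simp only [dotProduct_add, dotProduct_single, mul_one] at hsum
  linear_combination hsum - ha - q a b * hb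

theorem eq_one_of_apply_ne_zero (hq : MultAntisym q) {A : Matrix (Fin n) (Fin m) k}
    (hA : LinearIndependent k A.col)
    (hrel : ∀ i j, linearForm q (A i) * linearForm q (A j) =
      p i j • (linearForm q (A j) * linearForm q (A i)))
    {i : Fin n} {a b : Fin m} (hab : a ≠ b) (ha : A i a ≠ 0) (hb : A i b ≠ 0) : q a b = 1 := by
  by_contra hne
  -- The relations between row `i` and the other rows make the columns `a` and `b` proportional.
  have hprop (j : Fin n) : A i b * A j a = A i a * A j b := by
    by_cases hij : p i j = 1
    · have hcross := cross_coeff_eq_of_linearForm_mul hq (hrel i j) hab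
      rw [hij] at hcross
      refine mul_left_cancel₀ (sub_ne_zero.2 hne) ?_
      linear_combination -hcross
    · have hcol (c : Fin m) (hc : A i c ≠ 0) : A j c = 0 := by
        have hdiag := diag_coeff_eq_of_linearForm_mul (hq.1 c) (hrel i j)
        have : (1 - p i j) * (A i c * A j c) = 0 := by linear_combination hdiag
        simpa [sub_eq_zero, hc, Ne.symm hij] using this
      rw [hcol a ha, hcol b hb, mul_zero, mul_zero]
  have hdep : A i b • A.col a + (-A i a) • A.col b = 0 := by
    ext j
    simp [hprop j]
  exact hb ((LinearIndepOn.pair_iff _ hab).1 (hA.linearIndepOn _) _ _ hdep).1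

theorem exists_perm_of_linearForm_mul {p q A : Matrix (Fin n) (Fin n) k} (hp : ∀ i, p i i = 1)
    (hq : MultAntisym q) (hA : IsUnit A)
    (hrel : ∀ i j, linearForm q (A i) * linearForm q (A j) =
      p i j • (linearForm q (A j) * linearForm q (A i))) :
    ∃ σ : Equiv.Perm (Fin n), ∀ a b, q a b = p (σ a) (σ b) := by
  obtain ⟨σ, hσ⟩ := exists_perm_forall_apply_ne_zero_of_det_ne_zero
    (A.isUnit_iff_isUnit_det.1 hA).ne_zero
  refine ⟨σ, fun a b => ?_⟩
  obtain rfl | hab := eq_or_ne a b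
  · rw [hq.1, hp]
  by_cases hoff : A (σ a) b = 0 ∨ A (σ b) a = 0
  · have hcross := cross_coeff_eq_of_linearForm_mul hq (hrel (σ a) (σ b)) hab
    refine mul_right_cancel₀ (mul_ne_zero (hσ a) (hσ b)) ?_
    rcases hoff with h | h <;> rw [h] at hcross <;> linear_combination hcross
  · push Not at hoff
    have hdiag := diag_coeff_eq_of_linearForm_mul (hq.1 a) (hrel (σ a) (σ b))
    rw [eq_one_of_apply_ne_zero hq (Matrix.linearIndependent_cols_iff_isUnit.2 hA) hrel hab
      (hσ a) hoff.1]
    refine mul_right_cancel₀ (mul_ne_zero (hσ a) hoff.2) ?_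
    linear_combination hdiag

end QuadraticRelations

theorem exists_perm_of_surjective {p q : Matrix (Fin n) (Fin n) k} (hp : ∀ i, p i i = 1)
    (hq : MultAntisym q) (φ : QAS k p →ₐ[k] QAS k q) (hφ : Function.Surjective φ) :
    ∃ σ : Equiv.Perm (Fin n), ∀ a b, q a b = p (σ a) (σ b) :=
  have hA := isUnit_jacobian φ hφ
  exists_perm_of_linearForm_mul hp hq hA <|
    linearForm_jacobian_mul hp (Matrix.linearIndependent_rows_iff_isUnit.2 hA)

end QAS

/-- `O_p(k^n) ≅ O_q(k^m)` iff `n = m` and `q` is a permutation of `p`. -/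
theorem qas_iso_iff_perm {k : Type*} [Field k] {n m : ℕ}
    (p : Matrix (Fin n) (Fin n) k) (q : Matrix (Fin m) (Fin m) k)
    (hp : MultAntisym p) (hq : MultAntisym q) :
    Nonempty (QAS k p ≃ₐ[k] QAS k q) ↔
      ∃ h : n = m, ∃ σ : Equiv.Perm (Fin n),
        ∀ i j, q (Fin.cast h i) (Fin.cast h j) = p (σ i) (σ j) := by
  constructor
  · rintro ⟨φ⟩
    obtain rfl : n = m := le_antisymm
      (QAS.le_of_surjective φ.symm.toAlgHom φ.symm.surjective)
      (QAS.le_of_surjective φ.toAlgHom φ.surjective)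
    exact ⟨rfl, QAS.exists_perm_of_surjective hp.1 hq φ.toAlgHom φ.surjective⟩
  · rintro ⟨rfl, σ, hσ⟩
    refine ⟨QAS.congr σ.symm fun i j => ?_⟩
    simpa using hσ (σ.symm i) (σ.symm j)
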